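/- Jensen inequality for the projected p-Fisher information: for every p ∈ (1,2] and every smooth h : 𝕋^d × ℝ^d → (0,∞) bounded above and below by positive constants with bounded gradient, ∫_{𝕋^d} (Πh(x))^{p−2} |∇_x Πh(x)|² dx ≤ ∫_{𝕋^d × ℝ^d} h^{p−2} |∇_x h|² dμ. -/

import Mathlib

/-!
For `1 ≤ p ≤ 2` the power `a ↦ a ^ (2 - p)` is concave, so `(a, b) ↦ a ^ (p - 2) * ‖b‖ ^ 2`, a
squared norm divided by a positive concave function, is jointly convex on `a > 0`. Since
`∇_x Πh = Π(∇_x h)`, the pair `(Πh, ∇_x Πh)` is the average in `v` of `(h, ∇_x h)`, and Jensen's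
inequality gives `(Πh) ^ (p - 2) |∇_x Πh|² ≤ Π(h ^ (p - 2) |∇_x h|²)` at every `x`. It remains to
integrate in `x`.
-/

open MeasureTheory Real Filter

noncomputable section

/-- The standard Gaussian density `ℳ(v) = (2π)^{-d/2} exp(-|v|²/2)` on `ℝ^d`. -/
def gauss (d : ℕ) (v : Fin d → ℝ) : ℝ :=
  (2 * Real.pi) ^ (-(d : ℝ) / 2) * Real.exp (-(∑ i, v i ^ 2) / 2)

/-- Fundamental domain `[0,1]^d` of the torus `𝕋^d`; the normalized Lebesgue measure on
the torus is the restriction of Lebesgue measure to this cube. -/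
def cube (d : ℕ) : Set (Fin d → ℝ) := Set.Icc 0 1

/-- A function of `(x,v)` represents a function on `𝕋^d × ℝ^d` iff it is `ℤ^d`-periodic in `x`. -/
def IsPeriodic (d : ℕ) (f : (Fin d → ℝ) → (Fin d → ℝ) → ℝ) : Prop :=
  ∀ (x v : Fin d → ℝ) (k : Fin d → ℤ), f (x + fun i => (k i : ℝ)) v = f x v

/-- The projection `Πf(x) = ∫ f(x,u) ℳ(u) du`. -/
def proj (d : ℕ) (f : (Fin d → ℝ) → (Fin d → ℝ) → ℝ) (x : Fin d → ℝ) : ℝ :=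
  ∫ u, f x u * gauss d u

/-- Euclidean dot product on `ℝ^d`. -/
def dotp (d : ℕ) (a b : Fin d → ℝ) : ℝ := ∑ i, a i * b i

/-- Squared Euclidean norm on `ℝ^d`. -/
def nsq (d : ℕ) (a : Fin d → ℝ) : ℝ := ∑ i, a i ^ 2

/-- Gradient in the `x` variable. -/
def gradx (d : ℕ) (f : (Fin d → ℝ) → (Fin d → ℝ) → ℝ) (x v : Fin d → ℝ) : Fin d → ℝ :=
  fun i => fderiv ℝ (fun y => f y v) x (Pi.single i 1)

/-- Gradient in the `v` variable. -/
def gradv (d : ℕ) (f : (Fin d → ℝ) → (Fin d → ℝ) → ℝ) (x v : Fin d → ℝ) : Fin d → ℝ :=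
  fun i => fderiv ℝ (fun w => f x w) v (Pi.single i 1)

/-- Gradient of a function of `x` only. -/
def grad1 (d : ℕ) (g : (Fin d → ℝ) → ℝ) (x : Fin d → ℝ) : Fin d → ℝ :=
  fun i => fderiv ℝ g x (Pi.single i 1)

/-- Laplacian in the `v` variable. -/
def lapv (d : ℕ) (f : (Fin d → ℝ) → (Fin d → ℝ) → ℝ) (x v : Fin d → ℝ) : ℝ :=
  ∑ i, fderiv ℝ (fun w => gradv d f x w i) v (Pi.single i 1)

/-- Integral against `μ = ℳ(v) dv dx` on `𝕋^d × ℝ^d`. -/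
def intMu (d : ℕ) (F : (Fin d → ℝ) → (Fin d → ℝ) → ℝ) : ℝ :=
  ∫ x in cube d, ∫ v, F x v * gauss d v

/-- `I^X(h) = ∫ |∇_x h|²/h dμ`. -/
def IX (d : ℕ) (h : (Fin d → ℝ) → (Fin d → ℝ) → ℝ) : ℝ :=
  intMu d fun x v => nsq d (gradx d h x v) / h x v

/-- `I^V(h) = ∫ |∇_v h|²/h dμ`. -/
def IV (d : ℕ) (h : (Fin d → ℝ) → (Fin d → ℝ) → ℝ) : ℝ :=
  intMu d fun x v => nsq d (gradv d h x v) / h x v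

/-- `I^M(h) = ∫ (∇_x h · ∇_v h)/h dμ`. -/
def IM (d : ℕ) (h : (Fin d → ℝ) → (Fin d → ℝ) → ℝ) : ℝ :=
  intMu d fun x v => dotp d (gradx d h x v) (gradv d h x v) / h x v

/-- The full Fisher information `I(h) = ∫ |∇_{x,v} h|²/h dμ`. -/
def Ifull (d : ℕ) (h : (Fin d → ℝ) → (Fin d → ℝ) → ℝ) : ℝ :=
  intMu d fun x v => (nsq d (gradx d h x v) + nsq d (gradv d h x v)) / h x v

/-- `I^{ΠX}(h) = ∫_{𝕋^d} |∇_x Πh|²/Πh dx`. -/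
def IPiX (d : ℕ) (h : (Fin d → ℝ) → (Fin d → ℝ) → ℝ) : ℝ :=
  ∫ x in cube d, nsq d (grad1 d (proj d h) x) / proj d h x

/-- `I^{ΠX/X}(h) = ∫ (|∇_x(Πh/h)|²/(Πh/h)) h dμ`. -/
def IPiXX (d : ℕ) (h : (Fin d → ℝ) → (Fin d → ℝ) → ℝ) : ℝ :=
  intMu d fun x v =>
    nsq d (gradx d (fun y w => proj d h y / h y w) x v) / (proj d h x / h x v) * h x v

/-- `I^{ΠV/V}(h) = ∫ (|∇_v h|²/h)(Πh/h) dμ`. -/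
def IPiVV (d : ℕ) (h : (Fin d → ℝ) → (Fin d → ℝ) → ℝ) : ℝ :=
  intMu d fun x v => nsq d (gradv d h x v) / h x v * (proj d h x / h x v)

/-- The relative entropy `H(h) = ∫ h log h dμ`. -/
def Hent (d : ℕ) (h : (Fin d → ℝ) → (Fin d → ℝ) → ℝ) : ℝ :=
  intMu d fun x v => h x v * Real.log (h x v)

/-- The projected entropy `H_Π(h) = ∫_{𝕋^d} Πh log Πh dx`. -/
def HPi (d : ℕ) (h : (Fin d → ℝ) → (Fin d → ℝ) → ℝ) : ℝ :=
  ∫ x in cube d, proj d h x * Real.log (proj d h x)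

/-- The local average speed `U(x) = ∫ v h(x,v) ℳ(v) dv`. -/
def Uvec (d : ℕ) (h : (Fin d → ℝ) → (Fin d → ℝ) → ℝ) (x : Fin d → ℝ) : Fin d → ℝ :=
  fun i => ∫ v, v i * h x v * gauss d v

/-- The divergence `∇_x · U`. -/
def divU (d : ℕ) (h : (Fin d → ℝ) → (Fin d → ℝ) → ℝ) (x : Fin d → ℝ) : ℝ :=
  ∑ i, fderiv ℝ (fun y => Uvec d h y i) x (Pi.single i 1)

/-- The `p`-entropy `H^{(p)}(h) = ∫ (h^p - h)/(p(p-1)) dμ`. -/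
def Hp (d : ℕ) (p : ℝ) (h : (Fin d → ℝ) → (Fin d → ℝ) → ℝ) : ℝ :=
  intMu d fun x v => (h x v ^ p - h x v) / (p * (p - 1))

/-- The projected `p`-entropy `H_Π^{(p)}(h) = ∫_{𝕋^d} ((Πh)^p - Πh)/(p(p-1)) dx`. -/
def HpPi (d : ℕ) (p : ℝ) (h : (Fin d → ℝ) → (Fin d → ℝ) → ℝ) : ℝ :=
  ∫ x in cube d, ((proj d h x) ^ p - proj d h x) / (p * (p - 1))

/-- The `p`-Fisher information `I^{(p)}(h) = ∫ h^{p-2} |∇_{x,v} h|² dμ`. -/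
def Ipfull (d : ℕ) (p : ℝ) (h : (Fin d → ℝ) → (Fin d → ℝ) → ℝ) : ℝ :=
  intMu d fun x v => h x v ^ (p - 2) * (nsq d (gradx d h x v) + nsq d (gradv d h x v))

/-- The spatial `p`-Fisher information `∫ h^{p-2} |∇_x h|² dμ`. -/
def IpX (d : ℕ) (p : ℝ) (h : (Fin d → ℝ) → (Fin d → ℝ) → ℝ) : ℝ :=
  intMu d fun x v => h x v ^ (p - 2) * nsq d (gradx d h x v)

/-- Regularity of a time-dependent `h`: smooth, periodic in `x`, bounded above and below by
positive constants, with all partial derivatives bounded. -/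
def Regular (d : ℕ) (h : ℝ → (Fin d → ℝ) → (Fin d → ℝ) → ℝ) : Prop :=
  ContDiff ℝ (⊤ : ℕ∞) (fun q : ℝ × (Fin d → ℝ) × (Fin d → ℝ) => h q.1 q.2.1 q.2.2) ∧
  (∀ t, IsPeriodic d (h t)) ∧
  (∃ c C : ℝ, 0 < c ∧ ∀ t x v, c ≤ h t x v ∧ h t x v ≤ C) ∧
  (∀ n : ℕ, ∃ C : ℝ, ∀ q : ℝ × (Fin d → ℝ) × (Fin d → ℝ),
    ‖iteratedFDeriv ℝ n (fun r : ℝ × (Fin d → ℝ) × (Fin d → ℝ) => h r.1 r.2.1 r.2.2) q‖ ≤ C)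

/-- Regularity of a time-independent `h`: smooth, periodic in `x`, bounded above and below by
positive constants, with bounded gradient. -/
def RegularStatic (d : ℕ) (h : (Fin d → ℝ) → (Fin d → ℝ) → ℝ) : Prop :=
  ContDiff ℝ (⊤ : ℕ∞) (fun q : (Fin d → ℝ) × (Fin d → ℝ) => h q.1 q.2) ∧
  IsPeriodic d h ∧
  (∃ c C : ℝ, 0 < c ∧ ∀ x v, c ≤ h x v ∧ h x v ≤ C) ∧
  (∃ C : ℝ, ∀ q : (Fin d → ℝ) × (Fin d → ℝ),
    ‖fderiv ℝ (fun r : (Fin d → ℝ) × (Fin d → ℝ) => h r.1 r.2) q‖ ≤ C)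

/-- `h` solves the linear relaxation Boltzmann equation `∂_t h + v·∇_x h = λ(Πh - h)` for `t ≥ 0`. -/
def SolvesLRB (d : ℕ) (lam : ℝ) (h : ℝ → (Fin d → ℝ) → (Fin d → ℝ) → ℝ) : Prop :=
  ∀ t x v, 0 ≤ t →
    deriv (fun s => h s x v) t + dotp d v (gradx d (h t) x v)
      = lam * (proj d (h t) x - h t x v)

/-- `h` solves the free transport equation `∂_t h + v·∇_x h = 0` for `t ≥ 0`. -/
def SolvesTransport (d : ℕ) (h : ℝ → (Fin d → ℝ) → (Fin d → ℝ) → ℝ) : Prop :=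
  ∀ t x v, 0 ≤ t →
    deriv (fun s => h s x v) t + dotp d v (gradx d (h t) x v) = 0

/-- `h` solves the pure relaxation equation `∂_t h = λ(Πh - h)` for `t ≥ 0`. -/
def SolvesCollision (d : ℕ) (lam : ℝ) (h : ℝ → (Fin d → ℝ) → (Fin d → ℝ) → ℝ) : Prop :=
  ∀ t x v, 0 ≤ t →
    deriv (fun s => h s x v) t = lam * (proj d (h t) x - h t x v)

/-- `h` solves the kinetic Fokker–Planck equation `∂_t h + v·∇_x h = Δ_v h - v·∇_v h` for `t ≥ 0`. -/
def SolvesKFP (d : ℕ) (h : ℝ → (Fin d → ℝ) → (Fin d → ℝ) → ℝ) : Prop :=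
  ∀ t x v, 0 ≤ t →
    deriv (fun s => h s x v) t + dotp d v (gradx d (h t) x v)
      = lapv d (h t) x v - dotp d v (gradv d (h t) x v)

section Jensen

variable {F Ω : Type*} [NormedAddCommGroup F] [MeasurableSpace Ω] {ν : Measure Ω} {a : Ω → ℝ}
  {b : Ω → F} {p c M : ℝ}

lemma integrable_rpow_mul_norm_sq [IsFiniteMeasure ν] (hp2 : p ≤ 2) (hc : 0 < c)
    (ha : AEStronglyMeasurable a ν) (hb : AEStronglyMeasurable b ν)
    (hca : ∀ᵐ ω ∂ν, c ≤ a ω) (hbM : ∀ᵐ ω ∂ν, ‖b ω‖ ≤ M) :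
    Integrable (fun ω ↦ a ω ^ (p - 2) * ‖b ω‖ ^ 2) ν := by
  have hmeas : AEStronglyMeasurable (fun ω ↦ a ω ^ (p - 2) * ‖b ω‖ ^ 2) ν :=
    (ha.aemeasurable.pow_const (p - 2)).aestronglyMeasurable.mul (hb.norm.pow 2)
  refine .of_bound hmeas (c ^ (p - 2) * M ^ 2) ?_
  filter_upwards [hca, hbM] with ω hcω hMω
  have : 0 ≤ a ω ^ (p - 2) := rpow_nonneg (hc.le.trans hcω) _
  rw [norm_of_nonneg (by positivity)]
  gcongr ?_ * ?_ ^ 2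
  exact rpow_le_rpow_of_nonpos hc hcω (by linarith)

variable [NormedSpace ℝ F]

lemma two_mul_mul_sub_sq_mul_le_sq_div {g : ℝ} (hg : 0 < g) (t u : ℝ) :
    2 * t * u - t ^ 2 * g ≤ u ^ 2 / g := by
  rw [le_div_iff₀ hg]
  linarith [sq_nonneg (u - t * g)]

lemma convexOn_norm_sq_div {E : Type*} [AddCommMonoid E] [Module ℝ E] {s : Set E} {g : E → ℝ}
    (hg : ConcaveOn ℝ s g) (hpos : ∀ a ∈ s, 0 < g a) :
    ConvexOn ℝ (s ×ˢ Set.univ) fun z : E × F ↦ ‖z.2‖ ^ 2 / g z.1 := by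
  refine ⟨hg.1.prod convex_univ, ?_⟩
  rintro ⟨a, b⟩ ⟨ha, -⟩ ⟨a', b'⟩ ⟨ha', -⟩ α β hα hβ hαβ
  have hconc : α * g a + β * g a' ≤ g (α • a + β • a') := hg.2 ha ha' hα hβ hαβ
  have htri : ‖α • b + β • b'‖ ≤ α * ‖b‖ + β * ‖b'‖ := by
    simpa only [norm_smul_of_nonneg hα, norm_smul_of_nonneg hβ] using norm_add_le (α • b) (β • b')
  have hG : 0 < g (α • a + β • a') := hpos _ (hg.1 ha ha' hα hβ hαβ)
  set N := ‖α • b + β • b'‖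
  set G := g (α • a + β • a')
  -- `u ^ 2 / g` is the supremum over `t ≥ 0` of `2 * t * u - t ^ 2 * g`, linear in `(u, g)`.
  set t := N / G with ht
  have : 0 ≤ t := by positivity
  calc N ^ 2 / G = 2 * t * N - t ^ 2 * G := by rw [ht]; field_simp; ring
    _ ≤ 2 * t * (α * ‖b‖ + β * ‖b'‖) - t ^ 2 * (α * g a + β * g a') := by gcongr
    _ = α * (2 * t * ‖b‖ - t ^ 2 * g a) + β * (2 * t * ‖b'‖ - t ^ 2 * g a') := by ring
    _ ≤ α * (‖b‖ ^ 2 / g a) + β * (‖b'‖ ^ 2 / g a') := by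
      gcongr
      · exact two_mul_mul_sub_sq_mul_le_sq_div (hpos a ha) t _
      · exact two_mul_mul_sub_sq_mul_le_sq_div (hpos a' ha') t _

lemma convexOn_rpow_mul_norm_sq (hp1 : 1 ≤ p) (hp2 : p ≤ 2) :
    ConvexOn ℝ (Set.Ioi 0 ×ˢ Set.univ) fun z : ℝ × F ↦ z.1 ^ (p - 2) * ‖z.2‖ ^ 2 := by
  have hconc : ConcaveOn ℝ (Set.Ioi 0) fun a : ℝ ↦ a ^ (2 - p) :=
    (concaveOn_rpow (by linarith) (by linarith)).subset Set.Ioi_subset_Ici_self (convex_Ioi 0)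
  refine (convexOn_norm_sq_div hconc fun a ha ↦ rpow_pos_of_pos ha _).congr ?_
  rintro ⟨a, b⟩ ⟨ha, -⟩
  change ‖b‖ ^ 2 / a ^ (2 - p) = a ^ (p - 2) * ‖b‖ ^ 2
  rw [← neg_sub 2 p, rpow_neg (le_of_lt ha), mul_comm, div_eq_mul_inv]

lemma rpow_integral_mul_norm_integral_sq_le [CompleteSpace F] [IsProbabilityMeasure ν]
    (hp1 : 1 ≤ p) (hp2 : p ≤ 2) (hc : 0 < c) (hca : ∀ᵐ ω ∂ν, c ≤ a ω)
    (ha : Integrable a ν) (hb : Integrable b ν)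
    (hab : Integrable (fun ω ↦ a ω ^ (p - 2) * ‖b ω‖ ^ 2) ν) :
    (∫ ω, a ω ∂ν) ^ (p - 2) * ‖∫ ω, b ω ∂ν‖ ^ 2 ≤ ∫ ω, a ω ^ (p - 2) * ‖b ω‖ ^ 2 ∂ν := by
  -- Jensen's inequality needs a closed convex set, hence `Ici c` in place of `Ioi 0`.
  have hconv := (convexOn_rpow_mul_norm_sq (F := F) hp1 hp2).subset
    (Set.prod_mono_left (Set.Ici_subset_Ioi.2 hc)) ((convex_Ici c).prod convex_univ)
  have hcont : ContinuousOn (fun z : ℝ × F ↦ z.1 ^ (p - 2) * ‖z.2‖ ^ 2)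
      (Set.Ici c ×ˢ Set.univ) :=
    (continuousOn_fst.rpow_const fun z hz ↦ .inl (hc.trans_le hz.1).ne').mul (by fun_prop)
  simpa only [integral_pair ha hb] using
    hconv.map_integral_le (f := fun ω ↦ (a ω, b ω)) hcont (isClosed_Ici.prod isClosed_univ)
      (hca.mono fun ω hω ↦ ⟨hω, trivial⟩) (ha.prodMk hb) hab

end Jensen

lemma hasFDerivAt_integral_of_norm_fderiv_le {X V G : Type*} [NormedAddCommGroup X]
    [NormedSpace ℝ X] [NormedAddCommGroup G] [NormedSpace ℝ G] [MeasurableSpace V]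
    {ν : Measure V} [IsFiniteMeasure ν] {h : X → V → G} {M : ℝ}
    (hdiff : ∀ v, Differentiable ℝ fun x ↦ h x v) (hint : ∀ x, Integrable (h x) ν) {x : X}
    (hmeas : AEStronglyMeasurable (fun v ↦ fderiv ℝ (fun y ↦ h y v) x) ν)
    (hM : ∀ x v, ‖fderiv ℝ (fun y ↦ h y v) x‖ ≤ M) :
    HasFDerivAt (fun y ↦ ∫ v, h y v ∂ν) (∫ v, fderiv ℝ (fun y ↦ h y v) x ∂ν) x :=
  hasFDerivAt_integral_of_dominated_of_fderiv_le (bound := fun _ ↦ M) univ_mem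
    (Eventually.of_forall fun y ↦ (hint y).aestronglyMeasurable) (hint x) hmeas
    (ae_of_all _ fun v y _ ↦ hM y v) (integrable_const M)
    (ae_of_all _ fun v y _ ↦ (hdiff v y).hasFDerivAt)

lemma norm_fderiv_prodMk_left_le {𝕜 X V G : Type*} [NontriviallyNormedField 𝕜]
    [NormedAddCommGroup X] [NormedSpace 𝕜 X] [NormedAddCommGroup V] [NormedSpace 𝕜 V]
    [NormedAddCommGroup G] [NormedSpace 𝕜 G] {f : X × V → G} {x : X} {v : V}
    (hf : DifferentiableAt 𝕜 f (x, v)) :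
    ‖fderiv 𝕜 (fun y ↦ f (y, v)) x‖ ≤ ‖fderiv 𝕜 f (x, v)‖ := by
  have hpartial : HasFDerivAt (fun y ↦ f (y, v))
      (fderiv 𝕜 f (x, v) ∘L ContinuousLinearMap.inl 𝕜 X V) x :=
    hf.hasFDerivAt.comp (f := fun y ↦ (y, v)) x (hasFDerivAt_prodMk_left x v)
  rw [hpartial.fderiv]
  calc _ ≤ ‖fderiv 𝕜 f (x, v)‖ * ‖ContinuousLinearMap.inl 𝕜 X V‖ :=
        ContinuousLinearMap.opNorm_comp_le _ _
    _ ≤ _ := mul_le_of_le_one_right (norm_nonneg _) (ContinuousLinearMap.norm_inl_le_one 𝕜 X V)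

section ProjectedFisher

variable {X V F : Type*} [NormedAddCommGroup X] [NormedSpace ℝ X] [FiniteDimensional ℝ X]
  [MeasurableSpace X] [OpensMeasurableSpace X] [TopologicalSpace V] [MeasurableSpace V]
  [OpensMeasurableSpace V] [NormedAddCommGroup F] [NormedSpace ℝ F] {h : X → V → ℝ}
  {p c M : ℝ}

lemma stronglyMeasurable_fderiv_left (hcont : Continuous (Function.uncurry h)) :
    StronglyMeasurable fun q : X × V ↦ fderiv ℝ (fun y ↦ h y q.2) q.1 :=
  ((measurable_fderiv_with_param ℝ (f := fun v x ↦ h x v)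
    (hcont.comp continuous_swap)).comp measurable_swap).stronglyMeasurable

variable {ν : Measure V} [IsProbabilityMeasure ν]

lemma rpow_integral_mul_norm_fderiv_integral_sq_le [CompleteSpace F]
    (T : StrongDual ℝ X →L[ℝ] F) (hp1 : 1 ≤ p) (hp2 : p ≤ 2)
    (hcont : Continuous (Function.uncurry h))
    (hdiff : ∀ v, Differentiable ℝ fun x ↦ h x v) (hc : 0 < c) (hch : ∀ x v, c ≤ h x v)
    (hint : ∀ x, Integrable (h x) ν) (hM : ∀ x v, ‖fderiv ℝ (fun y ↦ h y v) x‖ ≤ M) (x : X) :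
    (∫ v, h x v ∂ν) ^ (p - 2) * ‖T (fderiv ℝ (fun y ↦ ∫ v, h y v ∂ν) x)‖ ^ 2
      ≤ ∫ v, h x v ^ (p - 2) * ‖T (fderiv ℝ (fun y ↦ h y v) x)‖ ^ 2 ∂ν := by
  have hmeas : AEStronglyMeasurable (fun v ↦ fderiv ℝ (fun y ↦ h y v) x) ν :=
    ((stronglyMeasurable_fderiv_left hcont).comp_measurable
      measurable_prodMk_left).aestronglyMeasurable
  have hgrad : Integrable (fun v ↦ fderiv ℝ (fun y ↦ h y v) x) ν :=
    .of_bound hmeas M (ae_of_all _ (hM x))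
  rw [(hasFDerivAt_integral_of_norm_fderiv_le hdiff hint hmeas hM).fderiv,
    ← T.integral_comp_comm hgrad]
  refine rpow_integral_mul_norm_integral_sq_le hp1 hp2 hc (ae_of_all _ (hch x)) (hint x)
    (T.integrable_comp hgrad) ?_
  exact integrable_rpow_mul_norm_sq hp2 hc (hint x).aestronglyMeasurable
    (T.integrable_comp hgrad).aestronglyMeasurable (ae_of_all _ (hch x))
    (ae_of_all _ fun v ↦ T.le_opNorm_of_le (hM x v))

/-- `T` chooses which components of the gradient enter, and the norm that measures them. -/
theorem projected_p_fisher_le_p_fisher_general [CompleteSpace F] {μ : Measure X}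
    [IsFiniteMeasure μ] (T : StrongDual ℝ X →L[ℝ] F)
    (hp1 : 1 ≤ p) (hp2 : p ≤ 2) (hcont : Continuous (Function.uncurry h))
    (hdiff : ∀ v, Differentiable ℝ fun x ↦ h x v) (hc : 0 < c) (hch : ∀ x v, c ≤ h x v)
    (hint : ∀ x, Integrable (h x) ν) (hM : ∀ x v, ‖fderiv ℝ (fun y ↦ h y v) x‖ ≤ M) :
    ∫ x, (∫ v, h x v ∂ν) ^ (p - 2) * ‖T (fderiv ℝ (fun y ↦ ∫ v, h y v ∂ν) x)‖ ^ 2 ∂μ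
      ≤ ∫ x, ∫ v, h x v ^ (p - 2) * ‖T (fderiv ℝ (fun y ↦ h y v) x)‖ ^ 2 ∂ν ∂μ := by
  have hfisher : Integrable (fun q : X × V ↦
      h q.1 q.2 ^ (p - 2) * ‖T (fderiv ℝ (fun y ↦ h y q.2) q.1)‖ ^ 2) (μ.prod ν) :=
    integrable_rpow_mul_norm_sq hp2 hc hcont.measurable.aestronglyMeasurable
      (T.continuous.comp_stronglyMeasurable
        (stronglyMeasurable_fderiv_left hcont)).aestronglyMeasurable
      (ae_of_all _ fun q ↦ hch q.1 q.2) (ae_of_all _ fun q ↦ T.le_opNorm_of_le (hM q.1 q.2))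
  have hproj (x : X) : 0 ≤ ∫ v, h x v ∂ν := integral_nonneg fun v ↦ hc.le.trans (hch x v)
  exact integral_mono_of_nonneg
    (ae_of_all _ fun x ↦ mul_nonneg (rpow_nonneg (hproj x) _) (sq_nonneg _))
    hfisher.integral_prod_left (ae_of_all _ fun x ↦
      rpow_integral_mul_norm_fderiv_integral_sq_le T hp1 hp2 hcont hdiff hc hch hint hM x)

end ProjectedFisher

section Gaussian

variable (d : ℕ)

lemma gauss_eq_prod_gaussianPDFReal (v : Fin d → ℝ) :
    gauss d v = ∏ i, ProbabilityTheory.gaussianPDFReal 0 1 (v i) := by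
  have h2π : (0 : ℝ) ≤ 2 * π := by positivity
  simp only [gauss, ProbabilityTheory.gaussianPDFReal, Finset.prod_mul_distrib, Finset.prod_const,
    Finset.card_univ, Fintype.card_fin, ← Real.exp_sum, NNReal.coe_one, mul_one, sub_zero]
  congr 1
  · rw [Real.sqrt_eq_rpow, ← Real.rpow_neg h2π, ← Real.rpow_natCast, ← Real.rpow_mul h2π]
    congr 1
    ring
  · rw [← Finset.sum_div, Finset.sum_neg_distrib]

lemma gauss_nonneg (v : Fin d → ℝ) : 0 ≤ gauss d v := by
  unfold gauss
  positivity

lemma continuous_gauss : Continuous (gauss d) := by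
  unfold gauss
  fun_prop

lemma integral_gauss : ∫ v, gauss d v = 1 := by
  simp only [gauss_eq_prod_gaussianPDFReal]
  rw [integral_fintype_prod_volume_eq_pow,
    ProbabilityTheory.integral_gaussianPDFReal_eq_one 0 one_ne_zero, one_pow]

/-- The standard Gaussian probability measure `ℳ(v) dv` on `ℝ^d`. -/
def gaussMeasure : Measure (Fin d → ℝ) :=
  volume.withDensity fun v ↦ ENNReal.ofReal (gauss d v)

instance isProbabilityMeasure_gaussMeasure : IsProbabilityMeasure (gaussMeasure d) where
  measure_univ := by
    have hint : Integrable (gauss d) := .of_integral_ne_zero (by simp [integral_gauss])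
    rw [gaussMeasure, withDensity_apply _ .univ, setLIntegral_univ,
      ← ofReal_integral_eq_lintegral_ofReal hint (ae_of_all _ (gauss_nonneg d)), integral_gauss,
      ENNReal.ofReal_one]

lemma integral_gaussMeasure (f : (Fin d → ℝ) → ℝ) :
    ∫ v, f v ∂(gaussMeasure d) = ∫ v, f v * gauss d v := by
  rw [gaussMeasure, integral_withDensity_eq_integral_toReal_smul
    (continuous_gauss d).measurable.ennreal_ofReal (ae_of_all _ fun _ ↦ ENNReal.ofReal_lt_top)]
  simp only [ENNReal.toReal_ofReal (gauss_nonneg d _), smul_eq_mul, mul_comm]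

/-- The coordinates of a linear functional in the standard basis, as a vector carrying the Euclidean
norm: `Fin d → ℝ` itself carries the supremum norm, so the operator norm of a derivative is not the
Euclidean norm of the gradient. -/
def dualCoord : StrongDual ℝ (Fin d → ℝ) →L[ℝ] EuclideanSpace ℝ (Fin d) :=
  ((EuclideanSpace.equiv (Fin d) ℝ).symm : (Fin d → ℝ) →L[ℝ] EuclideanSpace ℝ (Fin d)) ∘L
    ContinuousLinearMap.pi fun i ↦ ContinuousLinearMap.apply ℝ ℝ (Pi.single i 1)

lemma norm_dualCoord_sq (φ : StrongDual ℝ (Fin d → ℝ)) :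
    ‖dualCoord d φ‖ ^ 2 = nsq d fun i ↦ φ (Pi.single i 1) :=
  EuclideanSpace.real_norm_sq_eq _

end Gaussian

/-- Jensen inequality for the projected `p`-Fisher information:
`∫_{𝕋^d} (Πh)^{p-2} |∇_x Πh|² dx ≤ ∫ h^{p-2} |∇_x h|² dμ`. -/
theorem projected_p_fisher_le_p_fisher
    (d : ℕ) (hd : 1 ≤ d) (p : ℝ) (hp1 : 1 < p) (hp2 : p ≤ 2)
    (h : (Fin d → ℝ) → (Fin d → ℝ) → ℝ)
    (hpos : ∀ x v, 0 < h x v) (hreg : RegularStatic d h) :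
    (∫ x in cube d, (proj d h x) ^ (p - 2) * nsq d (grad1 d (proj d h) x))
      ≤ intMu d fun x v => h x v ^ (p - 2) * nsq d (gradx d h x v) := by
  obtain ⟨hs, -, ⟨c, C, hc, hcC⟩, M, hM⟩ := hreg
  have hdiff := hs.differentiable (by simp)
  have hint (x : Fin d → ℝ) : Integrable (h x) (gaussMeasure d) :=
    .of_bound (hs.continuous.comp (.prodMk_right x)).aestronglyMeasurable C
      (ae_of_all _ fun v ↦ (norm_of_nonneg (hpos x v).le).trans_le (hcC x v).2)
  have : IsFiniteMeasure (volume.restrict (cube d)) :=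
    isFiniteMeasure_restrict.2 isCompact_Icc.measure_ne_top
  have hfisher := projected_p_fisher_le_p_fisher_general (μ := volume.restrict (cube d))
    (dualCoord d) hp1.le hp2 hs.continuous
    (fun v ↦ hdiff.comp (differentiable_id.prodMk (differentiable_const v))) hc
    (fun x v ↦ (hcC x v).1) hint
    fun x v ↦ (norm_fderiv_prodMk_left_le (hdiff (x, v))).trans (hM (x, v))
  simp only [norm_dualCoord_sq, integral_gaussMeasure] at hfisher
  exact hfisher
end
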